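/- For the critical Curie–Weiss model (β = 1, h = 0), with ν_N as defined, let m̃_N(σ) = (1/N) Σ_{i=1}^N σ_i, and for m ∈ {−1 + 2l/N : l = 0,…,N} set μ̃_N(m) = μ_N(m̃_N = m) and ν̃_N(m) = ν_N(m̃_N = m). Then sup { |ν̃_N(m)/μ̃_N(m) − 1| : m ∈ {−1 + 2l/N : l = 0,…,N}, |m| ≤ N^{−1/4+δ/2} } → 0 as N → ∞. -/

import Mathlib

open Filter Real MeasureTheory

/-!
Linearise the square in the Hamiltonian with a Gaussian variable: with `q = N ^ (1 / 4)`, the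
partition function becomes `2 ^ N * q / √(2π)` times
`∫ x, exp (q ^ 4 * (log (cosh (x / q)) - (x / q) ^ 2 / 2))`, which tends to `∫ x, exp (-x ^ 4 / 12)`
by dominated convergence.

Both measures depend on a configuration only through its magnetization `m`, so the quotient of the
push-forwards is the quotient of two weights. In the mixture put `t = q * m + w / q`. Dividing by
`exp (N * m ^ 2 / 2)` leaves the exponent `-w ^ 2 / 2` up to `ε_N * (1 + w ^ 2)`, uniformly in
`|m| ≤ r / q` with `ε_N → 0`: at `u = t / q` the fourth-order part `m * u ^ 3 / 3 - u ^ 4 / 4` of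
the log-likelihood and the `-u ^ 4 / 12` from the quartic density add up to `-u ^ 3 * (u - m) / 3`,
which vanishes at `u = m`. The part `|t| > T`, where the mixing variable is cut off, contributes
`O(q * exp (-T ^ 4 / 24))`, and what remains is a Gaussian integral tending to `√(2π)`, which
cancels the `√(2π)` of the partition function.
-/

open Topology

/-! ### Taylor bounds for `log cosh` -/

lemma le_of_hasDerivAt_le {f f' g g' : ℝ → ℝ} {a x : ℝ} (ha : f a ≤ g a)
    (hf : ∀ y, HasDerivAt f (f' y) y) (hg : ∀ y, HasDerivAt g (g' y) y)
    (hle : ∀ y, a ≤ y → f' y ≤ g' y) (hx : a ≤ x) : f x ≤ g x :=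
  image_le_of_deriv_right_le_deriv_boundary
    (fun y _ => (hf y).continuousAt.continuousWithinAt) (fun y _ => (hf y).hasDerivWithinAt) ha
    (fun y _ => (hg y).continuousAt.continuousWithinAt) (fun y _ => (hg y).hasDerivWithinAt)
    (fun y hy => hle y hy.1) ⟨hx, le_rfl⟩

lemma hasDerivAt_tanh (x : ℝ) : HasDerivAt tanh (1 - tanh x ^ 2) x := by
  have hcosh := (cosh_pos x).ne'
  have hquot := (hasDerivAt_sinh x).fun_div (hasDerivAt_cosh x) hcosh
  simp only [← tanh_eq_sinh_div_cosh] at hquot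
  refine hquot.congr_deriv ?_
  rw [tanh_eq_sinh_div_cosh]
  field_simp

lemma hasDerivAt_log_cosh (x : ℝ) : HasDerivAt (fun y => log (cosh y)) (tanh x) x := by
  rw [tanh_eq_sinh_div_cosh]
  exact (hasDerivAt_cosh x).log (cosh_pos x).ne'

section

variable {x : ℝ}

lemma tanh_nonneg (hx : 0 ≤ x) : 0 ≤ tanh x := by
  rw [tanh_eq_sinh_div_cosh]
  exact div_nonneg (sinh_nonneg_iff.2 hx) (cosh_pos x).le

lemma tanh_le_self (hx : 0 ≤ x) : tanh x ≤ x :=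
  le_of_hasDerivAt_le (g := id) tanh_zero.le hasDerivAt_tanh hasDerivAt_id
    (fun y _ => sub_le_self 1 (sq_nonneg (tanh y))) hx

lemma sub_cube_le_tanh (hx : 0 ≤ x) : x - x ^ 3 / 3 ≤ tanh x := by
  refine le_of_hasDerivAt_le (f := fun y => y - y ^ 3 / 3) (by simp)
    (fun y => (hasDerivAt_id y).sub ((hasDerivAt_pow 3 y).div_const 3)) hasDerivAt_tanh
    (fun y hy => ?_) hx
  have hsq : tanh y ^ 2 ≤ y ^ 2 := pow_le_pow_left₀ (tanh_nonneg hy) (tanh_le_self hy) 2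
  norm_num
  linarith

lemma tanh_le_sub_cube_add (hx : 0 ≤ x) : tanh x ≤ x - x ^ 3 / 3 + 2 * x ^ 5 / 15 := by
  refine le_of_hasDerivAt_le (g := fun y => y - y ^ 3 / 3 + 2 * y ^ 5 / 15) (by simp)
    hasDerivAt_tanh (fun y => ((hasDerivAt_id y).sub ((hasDerivAt_pow 3 y).div_const 3)).add
      (((hasDerivAt_pow 5 y).const_mul 2).div_const 15)) (fun y hy => ?_) hx
  -- `y² - 2y⁴/3 = y (2 (y - y³/3) - y) ≤ y (2 tanh y - y) ≤ tanh² y`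
  have hsq : y ^ 2 - 2 * y ^ 4 / 3 ≤ tanh y ^ 2 := by
    nlinarith [mul_le_mul_of_nonneg_left (sub_cube_le_tanh hy) hy, sq_nonneg (tanh y - y)]
  norm_num
  linarith

end

lemma abs_log_cosh_sub_le (x : ℝ) : |log (cosh x) - (x ^ 2 / 2 - x ^ 4 / 12)| ≤ x ^ 6 / 45 := by
  wlog hx : 0 ≤ x generalizing x
  · have hneg := this (-x) (by linarith)
    rwa [cosh_neg, Even.neg_pow (by decide), Even.neg_pow (by decide),
      Even.neg_pow (by decide)] at hneg
  have hlower : x ^ 2 / 2 - x ^ 4 / 12 ≤ log (cosh x) :=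
    le_of_hasDerivAt_le (f := fun y => y ^ 2 / 2 - y ^ 4 / 12) (by simp)
      (fun y => ((hasDerivAt_pow 2 y).div_const 2).sub ((hasDerivAt_pow 4 y).div_const 12))
      hasDerivAt_log_cosh
      (fun y hy => by have := sub_cube_le_tanh hy; norm_num; linarith) hx
  have hupper : log (cosh x) ≤ x ^ 2 / 2 - x ^ 4 / 12 + x ^ 6 / 45 :=
    le_of_hasDerivAt_le (g := fun y => y ^ 2 / 2 - y ^ 4 / 12 + y ^ 6 / 45) (by simp)
      hasDerivAt_log_cosh
      (fun y => (((hasDerivAt_pow 2 y).div_const 2).sub ((hasDerivAt_pow 4 y).div_const 12)).add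
        ((hasDerivAt_pow 6 y).div_const 45))
      (fun y hy => by have := tanh_le_sub_cube_add hy; norm_num; linarith) hx
  rw [abs_of_nonneg (by linarith)]
  linarith

lemma log_cosh_le_of_abs_le_one {x : ℝ} (hx : |x| ≤ 1) :
    log (cosh x) ≤ x ^ 2 / 2 - x ^ 4 / 20 := by
  have htaylor := (abs_le.1 (abs_log_cosh_sub_le x)).2
  have hpow : x ^ 6 ≤ x ^ 4 := by
    rw [← Even.pow_abs (by decide) x, ← Even.pow_abs (n := 4) (by decide) x]
    exact pow_le_pow_of_le_one (abs_nonneg x) hx (by norm_num)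
  have hquartic : 0 ≤ x ^ 4 := by positivity
  linarith

lemma cosh_add_le_cosh_mul_exp (x : ℝ) {y : ℝ} (hy : 0 ≤ y) :
    cosh (x + y) ≤ cosh x * exp y := by
  rw [cosh_add, ← cosh_add_sinh y, mul_add]
  gcongr
  exact (sinh_lt_cosh x).le

lemma log_cosh_le_of_one_le_abs {x : ℝ} (hx : 1 ≤ |x|) :
    log (cosh x) ≤ x ^ 2 / 2 - x ^ 2 / 20 := by
  rw [← cosh_abs, ← sq_abs x]
  have hgrowth : log (cosh |x|) ≤ log (cosh 1) + (|x| - 1) := by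
    have hcosh := cosh_add_le_cosh_mul_exp 1 (sub_nonneg.2 hx)
    rw [add_sub_cancel] at hcosh
    rw [← log_exp (|x| - 1), ← log_mul (cosh_pos 1).ne' (exp_pos _).ne']
    exact log_le_log (cosh_pos _) hcosh
  have hone := (abs_le.1 (abs_log_cosh_sub_le 1)).2
  norm_num at hone
  nlinarith [sq_nonneg (|x| - 10 / 9)]

/-! ### Hubbard–Stratonovich representation of the partition function -/

lemma exp_neg_mul_sq_add_mul {b : ℝ} (hb : 0 < b) (c x : ℝ) :
    exp (-b * x ^ 2 + c * x) = exp (c ^ 2 / (4 * b)) * exp (-b * (x - c / (2 * b)) ^ 2) := by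
  rw [← exp_add]
  congr 1
  field_simp
  ring

lemma integrable_exp_neg_mul_sq_add_mul {b : ℝ} (hb : 0 < b) (c : ℝ) :
    Integrable fun x : ℝ => exp (-b * x ^ 2 + c * x) := by
  simp_rw [exp_neg_mul_sq_add_mul hb]
  exact ((integrable_exp_neg_mul_sq hb).comp_sub_right (c / (2 * b))).const_mul _

lemma integral_exp_neg_mul_sq_add_mul {b : ℝ} (hb : 0 < b) (c : ℝ) :
    ∫ x : ℝ, exp (-b * x ^ 2 + c * x) = exp (c ^ 2 / (4 * b)) * √(π / b) := by
  simp_rw [exp_neg_mul_sq_add_mul hb]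
  rw [integral_const_mul, integral_sub_right_eq_self (fun x => exp (-b * x ^ 2)),
    integral_gaussian]

lemma sum_exp_sum_mul {α : Type*} [Fintype α] (f : α → ℝ) (N : ℕ) (x : ℝ) :
    ∑ σ : Fin N → α, exp ((∑ i, f (σ i)) * x) = (∑ a, exp (f a * x)) ^ N := by
  simp_rw [Finset.sum_mul, exp_sum, Fintype.sum_pow]

lemma sum_exp_sq_sum {α : Type*} [Fintype α] (f : α → ℝ) {N : ℕ} (hN : 0 < N) :
    ∑ σ : Fin N → α, exp ((∑ i, f (σ i)) ^ 2 / (2 * N)) =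
      √(N / (2 * π)) * ∫ x : ℝ, exp (-(N / 2 : ℝ) * x ^ 2) * (∑ a, exp (f a * x)) ^ N := by
  have hNpos : (0 : ℝ) < N := Nat.cast_pos.2 hN
  have hlinear (σ : Fin N → α) : exp ((∑ i, f (σ i)) ^ 2 / (2 * N)) =
      √(N / (2 * π)) * ∫ x : ℝ, exp (-(N / 2 : ℝ) * x ^ 2 + (∑ i, f (σ i)) * x) := by
    rw [integral_exp_neg_mul_sq_add_mul (half_pos hNpos), mul_left_comm,
      ← sqrt_mul (by positivity), show N / (2 * π) * (π / (N / 2)) = 1 by field_simp, sqrt_one,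
      mul_one]
    ring_nf
  simp_rw [hlinear]
  rw [← Finset.mul_sum, ← integral_finsetSum _
    fun σ _ => integrable_exp_neg_mul_sq_add_mul (half_pos hNpos) _]
  simp_rw [exp_add, ← Finset.mul_sum, sum_exp_sum_mul]

/-- The spin `±1` encoded by a Boolean. -/
def spinValue (b : Bool) : ℝ := if b then 1 else -1

/-- The partition function `Z_N` of the critical Curie–Weiss model on `N` spins. -/
noncomputable def curieWeissPartition (N : ℕ) : ℝ :=
  ∑ σ : Fin N → Bool, exp (1 / (2 * N) * ∑ i, ∑ j, spinValue (σ i) * spinValue (σ j))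

/-- The integral left after linearising the Curie–Weiss Hamiltonian with a Gaussian variable, in
the scale `x / q` with `q = N ^ (1 / 4)` in which it converges to the quartic integral. -/
noncomputable def hubbardStratonovichIntegral (q : ℝ) : ℝ :=
  ∫ x : ℝ, exp (q ^ 4 * (log (cosh (x / q)) - (x / q) ^ 2 / 2))

/-- The normalising constant of the limiting density proportional to `exp (-y ^ 4 / 12)`. -/
noncomputable def quarticMass : ℝ := ∫ y : ℝ, exp (-y ^ 4 / 12)

lemma curieWeissPartition_eq {N : ℕ} {q : ℝ} (hq : 0 < q) (hN : (N : ℝ) = q ^ 4) :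
    curieWeissPartition N = 2 ^ N * q / √(2 * π) * hubbardStratonovichIntegral q := by
  have hNpos : 0 < N := Nat.cast_pos.1 (hN ▸ pow_pos hq 4)
  have hintegrand (x : ℝ) : exp (-(N / 2 : ℝ) * (x / q) ^ 2) *
      (∑ b, exp (spinValue b * (x / q))) ^ N =
        2 ^ N * exp (q ^ 4 * (log (cosh (x / q)) - (x / q) ^ 2 / 2)) := by
    have hcosh : ∑ b, exp (spinValue b * (x / q)) = 2 * cosh (x / q) := by
      simp only [Fintype.sum_bool, spinValue, if_true, Bool.false_eq_true, if_false, one_mul,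
        neg_one_mul, cosh_eq]
      ring
    rw [hcosh, mul_pow, ← exp_log (cosh_pos (x / q)), ← exp_nat_mul, mul_left_comm, ← exp_add, hN,
      log_exp]
    ring_nf
  have hsqrt : √((N : ℝ) / (2 * π)) = q ^ 2 / √(2 * π) := by
    rw [sqrt_div' _ (by positivity), hN, show q ^ 4 = (q ^ 2) ^ 2 by ring,
      sqrt_sq (by positivity)]
  have hscale := Measure.integral_comp_div
    (fun v => exp (-(N / 2 : ℝ) * v ^ 2) * (∑ b, exp (spinValue b * v)) ^ N) q
  simp_rw [hintegrand] at hscale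
  rw [integral_const_mul, abs_of_pos hq, smul_eq_mul] at hscale
  calc curieWeissPartition N
      = ∑ σ : Fin N → Bool, exp ((∑ i, spinValue (σ i)) ^ 2 / (2 * N)) := by
        simp only [curieWeissPartition, ← Finset.sum_mul_sum, ← sq, one_div_mul_eq_div]
    _ = q / √(2 * π) *
        (q * ∫ v : ℝ, exp (-(N / 2 : ℝ) * v ^ 2) * (∑ b, exp (spinValue b * v)) ^ N) := by
        rw [sum_exp_sq_sum spinValue hNpos, hsqrt]
        ring
    _ = 2 ^ N * q / √(2 * π) * hubbardStratonovichIntegral q := by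
        rw [← hscale, hubbardStratonovichIntegral]
        ring

lemma pow_four_mul_log_cosh_sub_le {q : ℝ} (hq : 1 ≤ q) (x : ℝ) :
    q ^ 4 * (log (cosh (x / q)) - (x / q) ^ 2 / 2) ≤ 1 / 20 + -(1 / 20) * x ^ 2 := by
  obtain ⟨v, rfl⟩ : ∃ v, x = q * v := ⟨x / q, by field_simp⟩
  rw [mul_div_cancel_left₀ v (by positivity)]
  rcases le_total 1 |v| with hv | hv
  · calc q ^ 4 * (log (cosh v) - v ^ 2 / 2) ≤ q ^ 4 * (-(1 / 20) * v ^ 2) := by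
          gcongr
          linarith [log_cosh_le_of_one_le_abs hv]
      _ = q ^ 2 * (-(1 / 20) * (q * v) ^ 2) := by ring
      _ ≤ 1 / 20 + -(1 / 20) * (q * v) ^ 2 := by
          nlinarith [mul_nonneg (sub_nonneg.2 (one_le_pow₀ (n := 2) hq)) (sq_nonneg (q * v))]
  · calc q ^ 4 * (log (cosh v) - v ^ 2 / 2) ≤ q ^ 4 * (-(1 / 20) * v ^ 4) := by
          gcongr
          linarith [log_cosh_le_of_abs_le_one hv]
      _ = -(1 / 20) * ((q * v) ^ 2) ^ 2 := by ring
      _ ≤ 1 / 20 + -(1 / 20) * (q * v) ^ 2 := by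
          nlinarith [sq_nonneg ((q * v) ^ 2 - 1), sq_nonneg (q * v)]

lemma tendsto_pow_four_mul_log_cosh_sub (x : ℝ) :
    Tendsto (fun q : ℝ => q ^ 4 * (log (cosh (x / q)) - (x / q) ^ 2 / 2)) atTop
      (𝓝 (-x ^ 4 / 12)) := by
  rw [tendsto_iff_dist_tendsto_zero]
  have hbound : Tendsto (fun q : ℝ => x ^ 6 / 45 / q ^ 2) atTop (𝓝 0) :=
    tendsto_const_nhds.div_atTop (tendsto_pow_atTop two_ne_zero)
  refine squeeze_zero' (Eventually.of_forall fun _ => dist_nonneg) ?_ hbound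
  filter_upwards [eventually_gt_atTop 0] with q hq
  calc dist (q ^ 4 * (log (cosh (x / q)) - (x / q) ^ 2 / 2)) (-x ^ 4 / 12)
      = q ^ 4 * |log (cosh (x / q)) - ((x / q) ^ 2 / 2 - (x / q) ^ 4 / 12)| := by
        rw [dist_eq, ← abs_of_pos (pow_pos hq 4), ← abs_mul, abs_of_pos (pow_pos hq 4)]
        congr 1
        field_simp
        ring
    _ ≤ q ^ 4 * ((x / q) ^ 6 / 45) := by
        gcongr
        exact abs_log_cosh_sub_le (x / q)
    _ = x ^ 6 / 45 / q ^ 2 := by field_simp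

lemma tendsto_hubbardStratonovichIntegral :
    Tendsto hubbardStratonovichIntegral atTop (𝓝 quarticMass) := by
  refine tendsto_integral_filter_of_dominated_convergence
    (fun x => exp (1 / 20) * exp (-(1 / 20) * x ^ 2)) (Eventually.of_forall fun q => ?_) ?_
    ((integrable_exp_neg_mul_sq (by norm_num)).const_mul _)
    (Eventually.of_forall fun x =>
      (continuous_exp.tendsto _).comp (tendsto_pow_four_mul_log_cosh_sub x))
  · have hlog : Continuous fun x => log (cosh (x / q)) :=
      (continuous_cosh.comp (continuous_id.div_const q)).log fun x => (cosh_pos _).ne'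
    exact (continuous_exp.comp (by fun_prop)).aestronglyMeasurable
  · filter_upwards [eventually_ge_atTop 1] with q hq
    refine Eventually.of_forall fun x => ?_
    rw [norm_eq_abs, abs_exp, ← exp_add]
    exact exp_le_exp.2 (pow_four_mul_log_cosh_sub_le hq x)

lemma integrable_exp_neg_pow_four_div {b : ℝ} (hb : 0 < b) :
    Integrable fun t : ℝ => exp (-t ^ 4 / b) := by
  refine ((integrable_exp_neg_mul_sq (one_div_pos.2 hb)).const_mul (exp (1 / b))).mono'
    (Continuous.aestronglyMeasurable (by fun_prop)) (Eventually.of_forall fun t => ?_)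
  have hquartic : -t ^ 4 ≤ 1 - t ^ 2 := by nlinarith [sq_nonneg (t ^ 2 - 1), sq_nonneg t]
  rw [norm_eq_abs, abs_exp, ← exp_add, exp_le_exp]
  calc -t ^ 4 / b ≤ (1 - t ^ 2) / b := by gcongr
    _ = 1 / b + -(1 / b) * t ^ 2 := by ring

lemma quarticMass_pos : 0 < quarticMass :=
  integral_exp_pos (integrable_exp_neg_pow_four_div (by norm_num))

/-! ### Likelihood of a magnetization under a product measure -/

/-- Log-likelihood ratio per spin, of i.i.d. spins with mean `u` against fair ones, for a
configuration with magnetization `m`. -/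
noncomputable def spinLogLikelihood (u m : ℝ) : ℝ :=
  (1 + m) / 2 * log (1 + u) + (1 - m) / 2 * log (1 - u)

lemma prod_one_add_mul_eq_exp {ι : Type*} [Fintype ι] {s : ι → ℝ} (hs : ∀ i, s i = 1 ∨ s i = -1)
    {u m : ℝ} (hu : |u| < 1) (hm : ∑ i, s i = Fintype.card ι * m) :
    ∏ i, (1 + u * s i) = exp (Fintype.card ι * spinLogLikelihood u m) := by
  obtain ⟨hneg, hpos⟩ := abs_lt.1 hu
  have hfactor (i : ι) : 1 + u * s i = exp (spinLogLikelihood u (s i)) := by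
    rcases hs i with h | h <;> rw [h, spinLogLikelihood] <;> norm_num <;>
      rw [exp_log (by linarith)]
    ring
  have hsum : ∑ i, spinLogLikelihood u (s i) = Fintype.card ι * spinLogLikelihood u m := by
    simp only [spinLogLikelihood, Finset.sum_add_distrib, ← Finset.sum_mul, ← Finset.sum_div,
      Finset.sum_sub_distrib, hm, Finset.sum_const, Finset.card_univ, nsmul_eq_mul, mul_one]
    ring
  rw [Finset.prod_congr rfl fun i _ => hfactor i, ← exp_sum, hsum]

lemma abs_log_one_add_sub_le {u : ℝ} (hu : |u| ≤ 1 / 2) :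
    |log (1 + u) - (u - u ^ 2 / 2 + u ^ 3 / 3 - u ^ 4 / 4 + u ^ 5 / 5)| ≤ 2 * u ^ 6 := by
  have htaylor := abs_log_sub_add_sum_range_le (x := -u) (by rw [abs_neg]; linarith) 5
  simp only [Finset.sum_range_succ, Finset.sum_range_zero, abs_neg, sub_neg_eq_add] at htaylor
  norm_num at htaylor
  calc _ = _ := by congr 1; ring
    _ ≤ |u| ^ 6 / (1 - |u|) := htaylor
    _ ≤ 2 * u ^ 6 := by
      rw [← Even.pow_abs (by decide) u, div_le_iff₀ (by linarith)]
      nlinarith [pow_nonneg (abs_nonneg u) 6]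

lemma abs_spinLogLikelihood_sub_le {u m : ℝ} (hu : |u| ≤ 1 / 2) (hm : |m| ≤ 1) :
    |spinLogLikelihood u m - (m * u - u ^ 2 / 2 + m * u ^ 3 / 3 - u ^ 4 / 4)| ≤
      2 * u ^ 6 + |m| * |u| ^ 5 := by
  obtain ⟨hm₁, hm₂⟩ := abs_le.1 hm
  set remainder : ℝ → ℝ := fun v =>
    log (1 + v) - (v - v ^ 2 / 2 + v ^ 3 / 3 - v ^ 4 / 4 + v ^ 5 / 5) with hremainder
  have hplus : |(1 + m) / 2 * remainder u| ≤ (1 + m) / 2 * (2 * u ^ 6) := by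
    rw [abs_mul, abs_of_nonneg (by linarith)]
    gcongr
    · linarith
    · exact abs_log_one_add_sub_le hu
  have hminus : |(1 - m) / 2 * remainder (-u)| ≤ (1 - m) / 2 * (2 * u ^ 6) := by
    rw [abs_mul, abs_of_nonneg (by linarith), ← Even.neg_pow (by decide) u]
    gcongr
    exact abs_log_one_add_sub_le (by rwa [abs_neg])
  have hquintic : |m * u ^ 5 / 5| ≤ |m| * |u| ^ 5 := by
    rw [abs_div, abs_mul, abs_pow]
    exact div_le_self (by positivity) (by norm_num)
  calc |spinLogLikelihood u m - (m * u - u ^ 2 / 2 + m * u ^ 3 / 3 - u ^ 4 / 4)|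
      = |(1 + m) / 2 * remainder u + (1 - m) / 2 * remainder (-u) + m * u ^ 5 / 5| := by
        simp only [hremainder, spinLogLikelihood, sub_eq_add_neg (1 : ℝ)]
        congr 1
        ring
    _ ≤ (1 + m) / 2 * (2 * u ^ 6) + (1 - m) / 2 * (2 * u ^ 6) + |m| * |u| ^ 5 :=
        (abs_add_three _ _ _).trans (by gcongr)
    _ = 2 * u ^ 6 + |m| * |u| ^ 5 := by ring

lemma abs_pow_three_mul_sub_div_three_le (u m : ℝ) :
    |u ^ 3 * (u - m) / 3| ≤ 2 * (|m| ^ 3 + |u - m| ^ 3) * |u - m| := by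
  have hu : |u| ≤ |m| + |u - m| := by linarith [abs_sub_abs_le_abs_sub u m]
  calc |u ^ 3 * (u - m) / 3| = |u| ^ 3 * |u - m| / 3 := by
        rw [abs_div, abs_mul, abs_pow, abs_of_pos (three_pos (α := ℝ))]
    _ ≤ (|m| + |u - m|) ^ 3 * |u - m| / 3 := by gcongr
    _ ≤ 2 ^ 2 * (|m| ^ 3 + |u - m| ^ 3) * |u - m| / 3 := by
        gcongr
        exact add_pow_le (abs_nonneg m) (abs_nonneg _) 3
    _ ≤ 2 * (|m| ^ 3 + |u - m| ^ 3) * |u - m| := by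
        linarith [show 0 ≤ (|m| ^ 3 + |u - m| ^ 3) * |u - m| by positivity]

lemma two_mul_pow_six_add_le (u m : ℝ) :
    2 * u ^ 6 + |m| * |u| ^ 5 ≤ 96 * (m ^ 6 + (u - m) ^ 6) := by
  have hu : |u| ≤ |m| + |u - m| := by linarith [abs_sub_abs_le_abs_sub u m]
  have hm : |m| ≤ |m| + |u - m| := by linarith [abs_nonneg (u - m)]
  rw [← Even.pow_abs (by decide) u, ← Even.pow_abs (by decide) m,
    ← Even.pow_abs (by decide) (u - m)]
  calc 2 * |u| ^ 6 + |m| * |u| ^ 5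
      ≤ 2 * (|m| + |u - m|) ^ 6 + (|m| + |u - m|) * (|m| + |u - m|) ^ 5 := by gcongr
    _ = 3 * (|m| + |u - m|) ^ 6 := by ring
    _ ≤ 3 * (2 ^ 5 * (|m| ^ 6 + |u - m| ^ 6)) := by
        gcongr
        exact add_pow_le (abs_nonneg m) (abs_nonneg _) 6
    _ = 96 * (|m| ^ 6 + |u - m| ^ 6) := by ring

lemma abs_spinLogLikelihood_recentred_le {u m a : ℝ} (hu : |u| ≤ a) (hm : |m| ≤ a)
    (ha : a ≤ 1 / 2) :
    |spinLogLikelihood u m - m ^ 2 / 2 - u ^ 4 / 12 + (u - m) ^ 2 / 2| ≤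
      2 * |m| ^ 3 * |u - m| + 100 * m ^ 6 + 400 * a ^ 2 * (u - m) ^ 2 := by
  have hsq_le : (u - m) ^ 2 ≤ 4 * a ^ 2 := by
    rw [← sq_abs]
    calc |u - m| ^ 2 ≤ (a + a) ^ 2 := by
          gcongr
          exact (abs_sub u m).trans (add_le_add hu hm)
      _ = 4 * a ^ 2 := by ring
  have hsq_le_one : (u - m) ^ 2 ≤ 1 := by nlinarith [(abs_nonneg u).trans hu]
  have habsorb : 2 * |u - m| ^ 3 * |u - m| + 96 * (u - m) ^ 6 ≤ 400 * a ^ 2 * (u - m) ^ 2 := by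
    calc 2 * |u - m| ^ 3 * |u - m| + 96 * (u - m) ^ 6
        = (2 + 96 * (u - m) ^ 2) * (u - m) ^ 2 * (u - m) ^ 2 := by
          rw [mul_assoc, ← pow_succ, Even.pow_abs (by decide)]
          ring
      _ ≤ (2 + 96 * 1) * (4 * a ^ 2) * (u - m) ^ 2 := by gcongr
      _ ≤ 400 * a ^ 2 * (u - m) ^ 2 := by nlinarith [mul_nonneg (sq_nonneg a) (sq_nonneg (u - m))]
  calc |spinLogLikelihood u m - m ^ 2 / 2 - u ^ 4 / 12 + (u - m) ^ 2 / 2|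
      = |(spinLogLikelihood u m - (m * u - u ^ 2 / 2 + m * u ^ 3 / 3 - u ^ 4 / 4)) -
          u ^ 3 * (u - m) / 3| := by congr 1; ring
    _ ≤ (2 * u ^ 6 + |m| * |u| ^ 5) + 2 * (|m| ^ 3 + |u - m| ^ 3) * |u - m| :=
        (abs_sub _ _).trans (add_le_add
          (abs_spinLogLikelihood_sub_le (hu.trans ha) (by linarith))
          (abs_pow_three_mul_sub_div_three_le u m))
    _ ≤ 2 * |m| ^ 3 * |u - m| + 100 * m ^ 6 + 400 * a ^ 2 * (u - m) ^ 2 := by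
        linarith [two_mul_pow_six_add_le u m, Even.pow_nonneg (n := 6) (by decide) m]

/-! ### Laplace asymptotics of the recentred mixture -/

/-- The mixing variable `t` replaced by `0` outside `[-T, T]`. -/
noncomputable def truncateAt (T t : ℝ) : ℝ := if |t| ≤ T then t else 0

lemma abs_truncateAt_le {T : ℝ} (hT : 0 ≤ T) (t : ℝ) : |truncateAt T t| ≤ T := by
  unfold truncateAt
  split_ifs with ht
  · exact ht
  · rwa [abs_zero]

lemma measurable_truncateAt (T : ℝ) : Measurable (truncateAt T) :=
  Measurable.ite (measurableSet_le (by fun_prop) (by fun_prop)) measurable_id measurable_const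

/-- The likelihood of magnetization `m` under spins of mean `truncateAt T t / q`, times the weight
`exp (-t ^ 4 / 12)` of `t` and divided by the Curie–Weiss factor `exp (q ^ 4 * m ^ 2 / 2)`, where
`q ^ 4` is the number of spins. -/
noncomputable def recentredIntegrand (q T m t : ℝ) : ℝ :=
  exp (q ^ 4 * (spinLogLikelihood (truncateAt T t / q) m - m ^ 2 / 2) - t ^ 4 / 12)

lemma measurable_recentredIntegrand (q T m : ℝ) : Measurable (recentredIntegrand q T m) := by
  have htruncate := measurable_truncateAt T
  unfold recentredIntegrand spinLogLikelihood
  fun_prop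

/-- The integral of `recentredIntegrand`, scaled so that its limit is the mass `√(2π)` of the
standard Gaussian weight. -/
noncomputable def recentredMixture (q T m : ℝ) : ℝ := q * ∫ t, recentredIntegrand q T m t

lemma integral_comp_add_div (g : ℝ → ℝ) {q : ℝ} (hq : 0 < q) (c : ℝ) :
    ∫ w : ℝ, g (c + w / q) = q * ∫ t, g t := by
  rw [Measure.integral_comp_div (fun y => g (c + y)) q, integral_add_left_eq_self g,
    abs_of_pos hq, smul_eq_mul]

/-- Uniform relative error, over `|m| ≤ r / q` and `|t| ≤ T`, of the Gaussian approximation to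
`recentredIntegrand q T m t`. -/
noncomputable def laplaceError (q T r : ℝ) : ℝ :=
  2 * (r ^ 3 / q) + 100 * (r ^ 3 / q) ^ 2 + 400 * (T / q) ^ 2

lemma laplaceError_nonneg {q T r : ℝ} (hq : 0 < q) (hr : 0 ≤ r) : 0 ≤ laplaceError q T r := by
  unfold laplaceError
  positivity

lemma pow_four_mul_recentred_error_le {q r m : ℝ} (hq : 0 < q) (hm : q * |m| ≤ r) (T v : ℝ) :
    q ^ 4 * (2 * |m| ^ 3 * |v| + 100 * m ^ 6 + 400 * (T / q) ^ 2 * v ^ 2) ≤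
      laplaceError q T r * (1 + (q ^ 2 * v) ^ 2) := by
  have hcubic : q ^ 2 * |m| ^ 3 ≤ r ^ 3 / q := by
    rw [le_div_iff₀ hq]
    calc q ^ 2 * |m| ^ 3 * q = (q * |m|) ^ 3 := by ring
      _ ≤ r ^ 3 := by gcongr
  have hr : 0 ≤ r ^ 3 / q := le_trans (by positivity) hcubic
  have hlinear : q ^ 2 * |v| ≤ 1 + (q ^ 2 * v) ^ 2 := by
    rw [mul_pow, ← sq_abs v, ← mul_pow]
    nlinarith [sq_nonneg (q ^ 2 * |v| - 1), sq_nonneg (q ^ 2 * |v|)]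
  calc q ^ 4 * (2 * |m| ^ 3 * |v| + 100 * m ^ 6 + 400 * (T / q) ^ 2 * v ^ 2)
      = 2 * (q ^ 2 * |m| ^ 3) * (q ^ 2 * |v|) + 100 * (q ^ 2 * |m| ^ 3) ^ 2 * 1 +
          400 * (T / q) ^ 2 * (q ^ 2 * v) ^ 2 := by
        rw [← Even.pow_abs (n := 6) (by decide) m]
        ring
    _ ≤ 2 * (r ^ 3 / q) * (1 + (q ^ 2 * v) ^ 2) + 100 * (r ^ 3 / q) ^ 2 * (1 + (q ^ 2 * v) ^ 2) +
          400 * (T / q) ^ 2 * (1 + (q ^ 2 * v) ^ 2) := by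
        gcongr
        · exact le_add_of_nonneg_right (sq_nonneg _)
        · exact le_add_of_nonneg_left zero_le_one
    _ = laplaceError q T r * (1 + (q ^ 2 * v) ^ 2) := by
        rw [laplaceError]
        ring

lemma abs_recentred_exponent_add_le {q T r m w : ℝ} (hq : 0 < q) (hm : q * |m| ≤ r) (hrT : r ≤ T)
    (hT : T ≤ q / 2) (ht : |q * m + w / q| ≤ T) :
    |q ^ 4 * (spinLogLikelihood ((q * m + w / q) / q) m - m ^ 2 / 2) - (q * m + w / q) ^ 4 / 12 +
      w ^ 2 / 2| ≤ laplaceError q T r * (1 + w ^ 2) := by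
  obtain ⟨u, rfl⟩ : ∃ u, w = q ^ 2 * (u - m) := ⟨m + w / q ^ 2, by field_simp; ring⟩
  have hcentre : q * m + q ^ 2 * (u - m) / q = q * u := by field_simp; ring
  rw [hcentre, abs_mul, abs_of_pos hq] at ht
  rw [hcentre, mul_div_cancel_left₀ u hq.ne']
  calc |q ^ 4 * (spinLogLikelihood u m - m ^ 2 / 2) - (q * u) ^ 4 / 12 +
        (q ^ 2 * (u - m)) ^ 2 / 2|
      = q ^ 4 * |spinLogLikelihood u m - m ^ 2 / 2 - u ^ 4 / 12 + (u - m) ^ 2 / 2| := by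
        rw [← abs_of_pos (pow_pos hq 4), ← abs_mul, abs_of_pos (pow_pos hq 4)]
        congr 1
        ring
    _ ≤ q ^ 4 * (2 * |m| ^ 3 * |u - m| + 100 * m ^ 6 + 400 * (T / q) ^ 2 * (u - m) ^ 2) := by
        gcongr
        exact abs_spinLogLikelihood_recentred_le ((le_div_iff₀' hq).2 ht)
          ((le_div_iff₀' hq).2 (hm.trans hrT)) ((div_le_iff₀ hq).2 (by linarith))
    _ ≤ laplaceError q T r * (1 + (q ^ 2 * (u - m)) ^ 2) :=
        pow_four_mul_recentred_error_le hq hm T (u - m)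

/-- The Gaussian weight `exp (-w ^ 2 / 2)` with relative error `ε * (1 + w ^ 2)` in the exponent. -/
noncomputable def gaussianEnvelope (ε w : ℝ) : ℝ := exp (-w ^ 2 / 2 + ε * (1 + w ^ 2))

lemma gaussianEnvelope_eq (ε : ℝ) :
    gaussianEnvelope ε = fun w => exp ε * exp (-(1 / 2 - ε) * w ^ 2) := by
  funext w
  rw [gaussianEnvelope, ← exp_add]
  congr 1
  ring

lemma integrable_gaussianEnvelope {ε : ℝ} (hε : ε < 1 / 2) : Integrable (gaussianEnvelope ε) := by
  rw [gaussianEnvelope_eq]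
  exact (integrable_exp_neg_mul_sq (sub_pos.2 hε)).const_mul _

lemma integral_gaussianEnvelope (ε : ℝ) :
    ∫ w, gaussianEnvelope ε w = exp ε * √(π / (1 / 2 - ε)) := by
  rw [gaussianEnvelope_eq, integral_const_mul, integral_gaussian]

lemma tendsto_integral_gaussianEnvelope :
    Tendsto (fun ε => ∫ w, gaussianEnvelope ε w) (𝓝 0) (𝓝 √(2 * π)) := by
  simp_rw [integral_gaussianEnvelope]
  have hcont : ContinuousAt (fun ε => exp ε * √(π / (1 / 2 - ε))) 0 := by
    refine continuous_exp.continuousAt.mul (ContinuousAt.sqrt ?_)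
    exact continuousAt_const.div (by fun_prop) (by norm_num)
  convert hcont.tendsto using 2
  rw [exp_zero, one_mul]
  congr 1
  ring

lemma recentredIntegrand_eq_of_lt {T t : ℝ} (ht : T < |t|) (q m : ℝ) :
    recentredIntegrand q T m t = exp (-(q ^ 4 * m ^ 2 / 2) - t ^ 4 / 12) := by
  rw [recentredIntegrand, truncateAt, if_neg ht.not_ge]
  simp only [zero_div, spinLogLikelihood, add_zero, sub_zero, log_one, mul_zero, zero_sub]
  ring_nf

lemma recentredIntegrand_le {q T r m : ℝ} (hq : 0 < q) (hm : q * |m| ≤ r) (hrT : r ≤ T)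
    (hT : T ≤ q / 2) (w : ℝ) :
    recentredIntegrand q T m (q * m + w / q) ≤ gaussianEnvelope (laplaceError q T r) w +
      exp (-T ^ 4 / 24) * exp (-(q * m + w / q) ^ 4 / 24) := by
  have hT_nonneg : 0 ≤ T := le_trans (by positivity) (hm.trans hrT)
  rcases le_or_gt |q * m + w / q| T with ht | ht
  · refine le_add_of_le_of_nonneg ?_ (by positivity)
    rw [recentredIntegrand, truncateAt, if_pos ht, gaussianEnvelope, exp_le_exp]
    linarith [(abs_le.1 (abs_recentred_exponent_add_le hq hm hrT hT ht)).2]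
  · refine le_add_of_nonneg_of_le (exp_pos _).le ?_
    rw [recentredIntegrand_eq_of_lt ht, ← exp_add, exp_le_exp]
    have hpow : T ^ 4 ≤ (q * m + w / q) ^ 4 := by
      rw [← Even.pow_abs (by decide) (q * m + w / q)]
      gcongr
    linarith [show 0 ≤ q ^ 4 * m ^ 2 / 2 by positivity]

lemma gaussianEnvelope_neg_le {q T r m : ℝ} (hq : 0 < q) (hm : q * |m| ≤ r) (hrT : r ≤ T)
    (hT : T ≤ q / 2) (w : ℝ) :
    gaussianEnvelope (-laplaceError q T r) w ≤ recentredIntegrand q T m (q * m + w / q) +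
      exp (-(q * (T - r)) ^ 2 / 4) * exp (-(1 / 4) * w ^ 2) := by
  rcases le_or_gt |q * m + w / q| T with ht | ht
  · refine le_add_of_le_of_nonneg ?_ (by positivity)
    rw [recentredIntegrand, truncateAt, if_pos ht, gaussianEnvelope, exp_le_exp]
    linarith [(abs_le.1 (abs_recentred_exponent_add_le hq hm hrT hT ht)).1]
  · refine le_add_of_nonneg_of_le (exp_pos _).le ?_
    rw [gaussianEnvelope, ← exp_add, exp_le_exp]
    have hw : q * (T - r) ≤ |w| := by
      have htriangle := abs_add_le (q * m) (w / q)
      rw [abs_mul, abs_div, abs_of_pos hq] at htriangle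
      rw [← le_div_iff₀' hq]
      linarith
    have hw_sq : (q * (T - r)) ^ 2 ≤ w ^ 2 := by
      rw [← sq_abs w]
      exact pow_le_pow_left₀ (mul_nonneg hq.le (sub_nonneg.2 hrT)) hw 2
    have herror := laplaceError_nonneg (T := T) hq (le_trans (by positivity) hm)
    linarith [mul_nonneg herror (show 0 ≤ 1 + w ^ 2 by positivity)]

lemma integrable_exp_neg_pow_four_div_comp {q : ℝ} (hq : 0 < q) (c : ℝ) :
    Integrable fun w => exp (-(c + w / q) ^ 4 / 24) :=
  ((integrable_exp_neg_pow_four_div (b := 24) (by norm_num)).comp_add_left c).comp_div hq.ne'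

lemma integrable_recentredIntegrand_comp {q T r m : ℝ} (hq : 0 < q) (hm : q * |m| ≤ r)
    (hrT : r ≤ T) (hT : T ≤ q / 2) (herror : laplaceError q T r < 1 / 2) :
    Integrable fun w => recentredIntegrand q T m (q * m + w / q) := by
  refine ((integrable_gaussianEnvelope herror).add
    ((integrable_exp_neg_pow_four_div_comp hq (q * m)).const_mul (exp (-T ^ 4 / 24)))).mono'
    ((measurable_recentredIntegrand q T m).comp (by fun_prop)).aestronglyMeasurable
    (Eventually.of_forall fun w => ?_)
  rw [norm_eq_abs, recentredIntegrand, abs_exp]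
  exact recentredIntegrand_le hq hm hrT hT w

lemma recentredMixture_le {q T r m : ℝ} (hq : 0 < q) (hm : q * |m| ≤ r) (hrT : r ≤ T)
    (hT : T ≤ q / 2) (herror : laplaceError q T r < 1 / 2) :
    recentredMixture q T m ≤ (∫ w, gaussianEnvelope (laplaceError q T r) w) +
      q * exp (-T ^ 4 / 24) * ∫ t : ℝ, exp (-t ^ 4 / 24) := by
  have henvelope := integrable_gaussianEnvelope herror
  have htail := (integrable_exp_neg_pow_four_div_comp hq (q * m)).const_mul (exp (-T ^ 4 / 24))
  have hmono := integral_mono (integrable_recentredIntegrand_comp hq hm hrT hT herror)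
    (henvelope.add htail) (recentredIntegrand_le hq hm hrT hT)
  simp only [Pi.add_apply] at hmono
  rwa [integral_add henvelope htail, integral_const_mul,
    integral_comp_add_div (recentredIntegrand q T m) hq,
    integral_comp_add_div (fun t => exp (-t ^ 4 / 24)) hq, mul_left_comm, ← mul_assoc] at hmono

lemma integral_gaussianEnvelope_neg_le {q T r m : ℝ} (hq : 0 < q) (hm : q * |m| ≤ r) (hrT : r ≤ T)
    (hT : T ≤ q / 2) (herror : laplaceError q T r < 1 / 2) :
    (∫ w, gaussianEnvelope (-laplaceError q T r) w) ≤ recentredMixture q T m +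
      exp (-(q * (T - r)) ^ 2 / 4) * √(π / (1 / 4)) := by
  have herror_nonneg := laplaceError_nonneg (T := T) hq (le_trans (by positivity) hm)
  have hmixture := integrable_recentredIntegrand_comp hq hm hrT hT herror
  have htail := (integrable_exp_neg_mul_sq (b := 1 / 4) (by norm_num)).const_mul
    (exp (-(q * (T - r)) ^ 2 / 4))
  have hmono := integral_mono (integrable_gaussianEnvelope (by linarith)) (hmixture.add htail)
    (gaussianEnvelope_neg_le hq hm hrT hT)
  simp only [Pi.add_apply] at hmono
  rwa [integral_add hmixture htail, integral_const_mul, integral_gaussian,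
    integral_comp_add_div (recentredIntegrand q T m) hq] at hmono

section Limits

variable {α : Type*} {l : Filter α} {q T r : α → ℝ}

lemma tendsto_laplaceError (hT : Tendsto (fun i => T i / q i) l (𝓝 0))
    (hr : Tendsto (fun i => r i ^ 3 / q i) l (𝓝 0)) :
    Tendsto (fun i => laplaceError (q i) (T i) (r i)) l (𝓝 0) := by
  unfold laplaceError
  convert ((hr.const_mul 2).add ((hr.pow 2).const_mul 100)).add ((hT.pow 2).const_mul 400) using 2
  norm_num

lemma eventually_abs_recentredMixture_sub_le (hq : Tendsto q l atTop)
    (hT : Tendsto (fun i => T i / q i) l (𝓝 0)) (hr : Tendsto (fun i => r i ^ 3 / q i) l (𝓝 0))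
    (htail : Tendsto (fun i => q i * exp (-T i ^ 4 / 24)) l (𝓝 0))
    (hgap : Tendsto (fun i => q i * (T i - r i)) l atTop) {ε : ℝ} (hε : 0 < ε) :
    ∀ᶠ i in l, ∀ m, q i * |m| ≤ r i → |recentredMixture (q i) (T i) m - √(2 * π)| ≤ ε := by
  have herror := tendsto_laplaceError hT hr
  have hupper : Tendsto (fun i => (∫ w, gaussianEnvelope (laplaceError (q i) (T i) (r i)) w) +
      q i * exp (-T i ^ 4 / 24) * ∫ t : ℝ, exp (-t ^ 4 / 24)) l (𝓝 √(2 * π)) := by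
    simpa only [Function.comp_def, zero_mul, add_zero] using
      (tendsto_integral_gaussianEnvelope.comp herror).add
        (htail.mul_const (∫ t : ℝ, exp (-t ^ 4 / 24)))
  have hlower : Tendsto (fun i => (∫ w, gaussianEnvelope (-laplaceError (q i) (T i) (r i)) w) -
      exp (-(q i * (T i - r i)) ^ 2 / 4) * √(π / (1 / 4))) l (𝓝 √(2 * π)) := by
    have hgap_tail : Tendsto (fun i => exp (-(q i * (T i - r i)) ^ 2 / 4)) l (𝓝 0) := by
      refine tendsto_exp_atBot.comp (Tendsto.atBot_div_const (by norm_num) ?_)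
      exact tendsto_neg_atTop_atBot.comp ((tendsto_pow_atTop two_ne_zero).comp hgap)
    have herror_neg : Tendsto (fun i => -laplaceError (q i) (T i) (r i)) l (𝓝 0) := by
      simpa only [neg_zero] using herror.neg
    simpa only [Function.comp_def, zero_mul, sub_zero] using
      (tendsto_integral_gaussianEnvelope.comp herror_neg).sub (hgap_tail.mul_const √(π / (1 / 4)))
  filter_upwards [hq.eventually_gt_atTop 0, hgap.eventually_ge_atTop 0,
    hT.eventually_le_const (show (0 : ℝ) < 1 / 2 by norm_num),
    herror.eventually_lt_const (show (0 : ℝ) < 1 / 2 by norm_num),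
    hupper.eventually_le_const (lt_add_of_pos_right _ hε),
    hlower.eventually_const_le (sub_lt_self _ hε)] with i hqi hgapi hTi herrori hupperi hloweri m hm
  have hrT : r i ≤ T i := sub_nonneg.1 (nonneg_of_mul_nonneg_right hgapi hqi)
  have hTq : T i ≤ q i / 2 := by linarith [(div_le_iff₀ hqi).1 hTi]
  rw [abs_le]
  constructor
  · linarith [integral_gaussianEnvelope_neg_le hqi hm hrT hTq herrori]
  · linarith [recentredMixture_le hqi hm hrT hTq herrori]

end Limits

/-! ### Push-forwards under the magnetization -/

section Configurations

variable {N : ℕ}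

/-- The magnetization `m̃_N(σ)` of a spin configuration, the mean of its spins. -/
noncomputable def magnetization (σ : Fin N → Bool) : ℝ := (1 / N : ℝ) * ∑ i, spinValue (σ i)

/-- The critical Curie–Weiss Gibbs measure `μ_N`, as a mass function on configurations. -/
noncomputable def curieWeissGibbs (σ : Fin N → Bool) : ℝ :=
  exp (1 / (2 * N) * ∑ i, ∑ j, spinValue (σ i) * spinValue (σ j)) / curieWeissPartition N

/-- The mixture of product measures with spin mean `truncateAt T t / q`, where `t` has density
proportional to `exp (-t ^ 4 / 12)`; this is `ν_N` for `q = N ^ (1 / 4)` and `T = N ^ δ`. -/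
noncomputable def truncatedMixture (q T : ℝ) (σ : Fin N → Bool) : ℝ :=
  ∫ t : ℝ, (∏ i, (1 / 2 : ℝ) * (1 + truncateAt T t * spinValue (σ i) / q)) *
    (exp (-t ^ 4 / 12) / quarticMass)

/-- The mass that `p` gives to the configurations of magnetization `m`. -/
noncomputable def magnetizationMass (p : (Fin N → Bool) → ℝ) (m : ℝ) : ℝ :=
  ∑ σ, if magnetization σ = m then p σ else 0

lemma spinValue_eq_one_or_eq_neg_one (b : Bool) : spinValue b = 1 ∨ spinValue b = -1 := by
  cases b <;> simp [spinValue]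

lemma sum_spinValue_eq (σ : Fin N → Bool) : ∑ i, spinValue (σ i) = N * magnetization σ := by
  rcases N.eq_zero_or_pos with rfl | hN
  · simp
  · rw [magnetization]
    field_simp

lemma exists_magnetization_eq {l : ℕ} (hN : 0 < N) (hl : l ≤ N) :
    ∃ σ : Fin N → Bool, magnetization σ = -1 + 2 * (l : ℝ) / N := by
  obtain ⟨k, rfl⟩ := Nat.exists_eq_add_of_le hl
  have hlk : ((l : ℝ) + k) ≠ 0 := by exact_mod_cast hN.ne'
  refine ⟨fun i => decide ((i : ℕ) < l), ?_⟩
  have hsum : ∑ i : Fin (l + k), spinValue (decide ((i : ℕ) < l)) = l - k := by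
    rw [Fin.sum_univ_add]
    simp [spinValue, sub_eq_add_neg]
  rw [magnetization, hsum]
  push_cast
  field_simp
  ring

lemma magnetizationMass_eq_card_mul {p : (Fin N → Bool) → ℝ} {φ : ℝ → ℝ}
    (hp : ∀ σ, p σ = φ (magnetization σ)) (m : ℝ) :
    magnetizationMass p m =
      (Finset.univ.filter fun σ : Fin N → Bool => magnetization σ = m).card * φ m := by
  rw [magnetizationMass, ← Finset.sum_filter, Finset.sum_congr rfl
    fun σ hσ => (hp σ).trans (congrArg φ (Finset.mem_filter.1 hσ).2), Finset.sum_const,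
    nsmul_eq_mul]

lemma curieWeissGibbs_eq (σ : Fin N → Bool) :
    curieWeissGibbs σ = exp (N * magnetization σ ^ 2 / 2) / curieWeissPartition N := by
  rw [curieWeissGibbs, ← Finset.sum_mul_sum, sum_spinValue_eq]
  rcases N.eq_zero_or_pos with rfl | hN
  · simp
  · congr 2
    field_simp

lemma truncatedMixture_eq {q T : ℝ} (hq : 0 < q) (hN : (N : ℝ) = q ^ 4) (hT : 0 ≤ T) (hTq : T < q)
    (σ : Fin N → Bool) :
    truncatedMixture q T σ = exp (N * magnetization σ ^ 2 / 2) / (2 ^ N * quarticMass) *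
      ∫ t, recentredIntegrand q T (magnetization σ) t := by
  rw [truncatedMixture, ← integral_const_mul]
  congr 1
  funext t
  have hmean : |truncateAt T t / q| < 1 := by
    rw [abs_div, abs_of_pos hq, div_lt_one hq]
    exact (abs_truncateAt_le hT t).trans_lt hTq
  have hprod := prod_one_add_mul_eq_exp (fun i => spinValue_eq_one_or_eq_neg_one (σ i)) hmean
    (by rw [sum_spinValue_eq, Fintype.card_fin])
  simp only [Fintype.card_fin, hN, ← mul_div_right_comm] at hprod
  simp only [Finset.prod_mul_distrib, Finset.prod_const, Finset.card_univ, Fintype.card_fin, hprod,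
    recentredIntegrand]
  rw [hN, div_mul_eq_mul_div, ← exp_add, mul_div_assoc', mul_assoc, ← exp_add, one_div, inv_pow]
  field_simp
  ring_nf

lemma magnetizationMass_div_eq {q T m : ℝ} (hq : 0 < q) (hN : (N : ℝ) = q ^ 4) (hT : 0 ≤ T)
    (hTq : T < q) (hm : ∃ σ : Fin N → Bool, magnetization σ = m) :
    magnetizationMass (truncatedMixture (N := N) q T) m /
        magnetizationMass (curieWeissGibbs (N := N)) m =
      hubbardStratonovichIntegral q / quarticMass * (recentredMixture q T m / √(2 * π)) := by
  obtain ⟨σ, hσ⟩ := hm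
  have hcard : ((Finset.univ.filter fun σ : Fin N → Bool => magnetization σ = m).card : ℝ) ≠ 0 :=
    Nat.cast_ne_zero.2 (Finset.card_ne_zero_of_mem (Finset.mem_filter.2 ⟨Finset.mem_univ σ, hσ⟩))
  rw [magnetizationMass_eq_card_mul (φ := fun m => exp (N * m ^ 2 / 2) / (2 ^ N * quarticMass) *
      ∫ t, recentredIntegrand q T m t) (truncatedMixture_eq hq hN hT hTq),
    magnetizationMass_eq_card_mul (φ := fun m => exp (N * m ^ 2 / 2) / curieWeissPartition N)
      curieWeissGibbs_eq, mul_div_mul_left _ _ hcard, curieWeissPartition_eq hq hN,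
    recentredMixture]
  field_simp

end Configurations

/-! ### Uniform convergence of the quotient -/

theorem eventually_abs_magnetizationMass_div_sub_one_le {q T r : ℕ → ℝ} (hq : Tendsto q atTop atTop)
    (hN : ∀ N : ℕ, (N : ℝ) = q N ^ 4) (hT_nonneg : ∀ N, 0 ≤ T N)
    (hT : Tendsto (fun N => T N / q N) atTop (𝓝 0))
    (hr : Tendsto (fun N => r N ^ 3 / q N) atTop (𝓝 0))
    (htail : Tendsto (fun N => q N * exp (-T N ^ 4 / 24)) atTop (𝓝 0))
    (hgap : Tendsto (fun N => q N * (T N - r N)) atTop atTop) {ε : ℝ} (hε : 0 < ε) :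
    ∀ᶠ N in atTop, ∀ m, (∃ σ : Fin N → Bool, magnetization σ = m) → q N * |m| ≤ r N →
      |magnetizationMass (truncatedMixture (N := N) (q N) (T N)) m /
        magnetizationMass (curieWeissGibbs (N := N)) m - 1| ≤ ε := by
  have hsqrt : 0 < √(2 * π) := by positivity
  have hpartition : Tendsto (fun N => hubbardStratonovichIntegral (q N) / quarticMass) atTop
      (𝓝 1) := by
    simpa only [Function.comp_def, div_self quarticMass_pos.ne'] using
      (tendsto_hubbardStratonovichIntegral.comp hq).div_const quarticMass
  filter_upwards [hq.eventually_gt_atTop 0, hT.eventually_lt_const one_pos,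
    Metric.tendsto_nhds.1 hpartition (min 1 (ε / 2)) (by positivity),
    eventually_abs_recentredMixture_sub_le hq hT hr htail hgap
      (show 0 < ε / 4 * √(2 * π) by positivity)] with N hqN hTN hpartitionN hmixtureN m hm hmr
  rw [magnetizationMass_div_eq hqN (hN N) (hT_nonneg N) ((div_lt_one hqN).1 hTN) hm]
  set κ := hubbardStratonovichIntegral (q N) / quarticMass
  set ρ := recentredMixture (q N) (T N) m / √(2 * π) with hρ
  rw [dist_eq, lt_min_iff] at hpartitionN
  have hκ : |κ| ≤ 2 := by linarith [abs_sub_abs_le_abs_sub κ 1, abs_one (α := ℝ)]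
  have hρ_sub : |ρ - 1| ≤ ε / 4 := by
    rw [hρ, div_sub_one hsqrt.ne', abs_div, abs_of_pos hsqrt, div_le_iff₀ hsqrt]
    exact hmixtureN m hmr
  calc |κ * ρ - 1| = |κ * (ρ - 1) + (κ - 1)| := by congr 1; ring
    _ ≤ |κ| * |ρ - 1| + |κ - 1| := (abs_add_le _ _).trans_eq (by rw [abs_mul])
    _ ≤ 2 * (ε / 4) + ε / 2 := by
        gcongr
        exact hpartitionN.2.le
    _ = ε := by ring

lemma tendsto_natCast_rpow_div_rpow {a b : ℝ} (hab : a < b) :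
    Tendsto (fun N : ℕ => (N : ℝ) ^ a / (N : ℝ) ^ b) atTop (𝓝 0) := by
  refine ((tendsto_rpow_neg_atTop (sub_pos.2 hab)).comp tendsto_natCast_atTop_atTop).congr' ?_
  filter_upwards [eventually_gt_atTop 0] with N hN
  rw [Function.comp_apply, ← rpow_sub (Nat.cast_pos.2 hN), neg_sub]

lemma tendsto_natCast_rpow_sub_rpow_atTop {a b : ℝ} (hb : 0 < b) (hab : a < b) :
    Tendsto (fun N : ℕ => (N : ℝ) ^ b - (N : ℝ) ^ a) atTop atTop := by
  have hfactor : Tendsto (fun N : ℕ => 1 - (N : ℝ) ^ a / (N : ℝ) ^ b) atTop (𝓝 1) := by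
    simpa only [sub_zero] using (tendsto_natCast_rpow_div_rpow hab).const_sub 1
  refine (((tendsto_rpow_atTop hb).comp tendsto_natCast_atTop_atTop).atTop_mul_pos one_pos
    hfactor).congr' ?_
  filter_upwards [eventually_gt_atTop 0] with N hN
  rw [Function.comp_apply, mul_sub, mul_one,
    mul_div_cancel₀ _ (rpow_pos_of_pos (Nat.cast_pos.2 hN) b).ne']

lemma tendsto_natCast_rpow_mul_exp_neg_rpow {a b c : ℝ} (hb : 0 < b) (hc : 0 < c) :
    Tendsto (fun N : ℕ => (N : ℝ) ^ a * exp (-c * (N : ℝ) ^ b)) atTop (𝓝 0) := by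
  refine ((tendsto_rpow_mul_exp_neg_mul_atTop_nhds_zero (a / b) c hc).comp
    ((tendsto_rpow_atTop hb).comp tendsto_natCast_atTop_atTop)).congr fun N => ?_
  simp only [Function.comp_apply]
  rw [← rpow_mul N.cast_nonneg, mul_div_cancel₀ a hb.ne']

theorem eventually_abs_magnetizationMass_div_sub_one_le_of_rpow {δ γ : ℝ} (hδ0 : 0 < δ)
    (hδ : δ < 1 / 4) (hγδ : γ < δ) (hγ : γ < 1 / 12) {ε : ℝ} (hε : 0 < ε) :
    ∀ᶠ N : ℕ in atTop, ∀ m, (∃ σ : Fin N → Bool, magnetization σ = m) →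
      |m| ≤ (N : ℝ) ^ (-(1 / 4 : ℝ) + γ) →
      |magnetizationMass (truncatedMixture (N := N) ((N : ℝ) ^ ((1 : ℝ) / 4)) ((N : ℝ) ^ δ)) m /
        magnetizationMass (curieWeissGibbs (N := N)) m - 1| ≤ ε := by
  have hq : Tendsto (fun N : ℕ => (N : ℝ) ^ ((1 : ℝ) / 4)) atTop atTop :=
    (tendsto_rpow_atTop (by norm_num)).comp tendsto_natCast_atTop_atTop
  have hN (N : ℕ) : (N : ℝ) = ((N : ℝ) ^ ((1 : ℝ) / 4)) ^ 4 := by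
    rw [← rpow_mul_natCast N.cast_nonneg]
    norm_num
  have hr : Tendsto (fun N : ℕ => ((N : ℝ) ^ γ) ^ 3 / (N : ℝ) ^ ((1 : ℝ) / 4)) atTop (𝓝 0) := by
    simp only [← rpow_mul_natCast (Nat.cast_nonneg _)]
    exact tendsto_natCast_rpow_div_rpow (by push_cast; linarith)
  have htail : Tendsto (fun N : ℕ => (N : ℝ) ^ ((1 : ℝ) / 4) * exp (-((N : ℝ) ^ δ) ^ 4 / 24)) atTop
      (𝓝 0) := by
    refine (tendsto_natCast_rpow_mul_exp_neg_rpow (a := 1 / 4) (b := δ * (4 : ℕ)) (c := 1 / 24)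
      (by positivity) (by norm_num)).congr fun N => ?_
    rw [rpow_mul_natCast N.cast_nonneg]
    ring_nf
  filter_upwards [eventually_gt_atTop 0, eventually_abs_magnetizationMass_div_sub_one_le hq hN
    (fun N => rpow_nonneg N.cast_nonneg δ) (tendsto_natCast_rpow_div_rpow hδ) hr htail
    (hq.atTop_mul_atTop₀ (tendsto_natCast_rpow_sub_rpow_atTop hδ0 hγδ)) hε]
    with N hNpos hquotient m hm hm_le
  refine hquotient m hm ?_
  calc (N : ℝ) ^ ((1 : ℝ) / 4) * |m|
      ≤ (N : ℝ) ^ ((1 : ℝ) / 4) * (N : ℝ) ^ (-(1 / 4 : ℝ) + γ) := by gcongr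
    _ = (N : ℝ) ^ γ := by
        rw [← rpow_add (Nat.cast_pos.2 hNpos), add_neg_cancel_left]

theorem stmt_19_general
    (δ γ : ℝ) (hδ0 : 0 < δ) (hδ : δ < 1 / 4) (hγδ : γ < δ) (hγ : γ < 1 / 12)
    (spin : Bool → ℝ) (hspin : ∀ b, spin b = if b then 1 else -1)
    (Z : ℕ → ℝ)
    (hZ : ∀ N : ℕ, Z N = ∑ σ : Fin N → Bool,
      Real.exp (1 / (2 * N) * ∑ i, ∑ j, spin (σ i) * spin (σ j)))
    (μ : ∀ N : ℕ, (Fin N → Bool) → ℝ)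
    (hμ : ∀ N σ, μ N σ =
      Real.exp (1 / (2 * N) * ∑ i, ∑ j, spin (σ i) * spin (σ j)) / Z N)
    (f1 : ℝ → ℝ)
    (hf1 : ∀ x, f1 x = Real.exp (-x ^ 4 / 12) / ∫ y : ℝ, Real.exp (-y ^ 4 / 12))
    (ν : ∀ N : ℕ, (Fin N → Bool) → ℝ)
    (hν : ∀ N σ, ν N σ =
      ∫ t : ℝ, (∏ i, (1 / 2 : ℝ) * (1 + (if |t| ≤ (N : ℝ) ^ δ then t else 0) *
        spin (σ i) / (N : ℝ) ^ ((1 : ℝ) / 4))) * f1 t)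
    (μtilde νtilde : ℕ → ℝ → ℝ)
    (hμtilde : ∀ N m, μtilde N m = ∑ σ : Fin N → Bool,
      if (1 / N : ℝ) * ∑ i, spin (σ i) = m then μ N σ else 0)
    (hνtilde : ∀ N m, νtilde N m = ∑ σ : Fin N → Bool,
      if (1 / N : ℝ) * ∑ i, spin (σ i) = m then ν N σ else 0) :
    ∀ ε > (0 : ℝ), ∃ N₀ : ℕ, ∀ N ≥ N₀, ∀ l : ℕ, l ≤ N →
      |(-1 + 2 * (l : ℝ) / N)| ≤ (N : ℝ) ^ (-(1 / 4 : ℝ) + γ) →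
      |νtilde N (-1 + 2 * (l : ℝ) / N) / μtilde N (-1 + 2 * (l : ℝ) / N) - 1| ≤ ε := by
  obtain rfl : spin = spinValue := funext hspin
  have hμtilde_eq (N : ℕ) (m : ℝ) :
      μtilde N m = magnetizationMass (curieWeissGibbs (N := N)) m := by
    simp only [hμtilde, hμ, hZ]
    rfl
  have hνtilde_eq (N : ℕ) (m : ℝ) : νtilde N m =
      magnetizationMass (truncatedMixture (N := N) ((N : ℝ) ^ ((1 : ℝ) / 4)) ((N : ℝ) ^ δ)) m := by
    simp only [hνtilde, hν, hf1]
    rfl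
  intro ε hε
  rw [← eventually_atTop]
  filter_upwards [eventually_abs_magnetizationMass_div_sub_one_le_of_rpow hδ0 hδ hγδ hγ hε,
    eventually_gt_atTop 0] with N hquotient hN l hl hm
  rw [hμtilde_eq, hνtilde_eq]
  exact hquotient _ (exists_magnetization_eq hN hl) hm

/-- For the critical Curie–Weiss model (`β = 1`, `h = 0`) with `ν_N` as in
Theorem `mainCW1b`, letting `μ̃_N(m) = μ_N(m̃_N = m)` and `ν̃_N(m) = ν_N(m̃_N = m)` for
`m ∈ {−1 + 2l/N : l = 0,…,N}`, the quotient `ν̃_N(m)/μ̃_N(m)` tends to `1` uniformly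
over `|m| ≤ N^{−1/4+δ/2}`. Spins `±1` are encoded by `Bool` via `spin`. -/
theorem stmt_19
    (δ : ℝ) (hδ0 : 0 < δ) (hδ : δ < 1 / 20)
    (spin : Bool → ℝ) (hspin : ∀ b, spin b = if b then 1 else -1)
    (Z : ℕ → ℝ)
    (hZ : ∀ N : ℕ, Z N = ∑ σ : Fin N → Bool,
      Real.exp (1 / (2 * N) * ∑ i, ∑ j, spin (σ i) * spin (σ j)))
    (μ : ∀ N : ℕ, (Fin N → Bool) → ℝ)
    (hμ : ∀ N σ, μ N σ =
      Real.exp (1 / (2 * N) * ∑ i, ∑ j, spin (σ i) * spin (σ j)) / Z N)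
    (f1 : ℝ → ℝ)
    (hf1 : ∀ x, f1 x = Real.exp (-x ^ 4 / 12) / ∫ y : ℝ, Real.exp (-y ^ 4 / 12))
    (ν : ∀ N : ℕ, (Fin N → Bool) → ℝ)
    (hν : ∀ N σ, ν N σ =
      ∫ t : ℝ, (∏ i, (1 / 2 : ℝ) * (1 + (if |t| ≤ (N : ℝ) ^ δ then t else 0) *
        spin (σ i) / (N : ℝ) ^ ((1 : ℝ) / 4))) * f1 t)
    -- the push-forwards under the magnetization m̃_N(σ) = (1/N) ∑_i σ_i
    (μtilde νtilde : ∀ N : ℕ, ℝ → ℝ)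
    (hμtilde : ∀ N m, μtilde N m = ∑ σ : Fin N → Bool,
      if (1 / N : ℝ) * ∑ i, spin (σ i) = m then μ N σ else 0)
    (hνtilde : ∀ N m, νtilde N m = ∑ σ : Fin N → Bool,
      if (1 / N : ℝ) * ∑ i, spin (σ i) = m then ν N σ else 0) :
    ∀ ε > (0 : ℝ), ∃ N₀ : ℕ, ∀ N ≥ N₀, ∀ l : ℕ, l ≤ N →
      |(-1 + 2 * (l : ℝ) / N)| ≤ (N : ℝ) ^ (-(1 / 4 : ℝ) + δ / 2) →
      |νtilde N (-1 + 2 * (l : ℝ) / N) / μtilde N (-1 + 2 * (l : ℝ) / N) - 1| ≤ ε := by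
  exact stmt_19_general δ (δ / 2) hδ0 (by linarith) (by linarith) (by linarith) spin hspin Z hZ μ hμ
    f1 hf1 ν hν μtilde νtilde hμtilde hνtilde
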